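/- arXiv:1407.5506 — 4 statements merged into one kernel-verified Lean document; each statement's English description precedes it below -/
import Mathlib

section
/- In the model of superfunctions on Minkowski superspacetime fixed in the context, the supersymmetry generators satisfy, as operators on smooth maps f : ℝ⁴ → Λ: (i) Q_a Q_b + Q_b Q_a = 0 and Q̄_a Q̄_b + Q̄_b Q̄_a = 0 for all a,b ∈ {1,2}; (ii) Q_a Q̄_b + Q̄_b Q_a = 2i Σ_{μ=0}^{3} Γ^μ_{ab} ∂_μ for all a,b ∈ {1,2}; (iii) each Q_a and each Q̄_b commutes with each partial derivative ∂_μ. -/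
noncomputable section

/-- Coordinates of the exterior algebra `Λ = ⋀(ℂ⁴)` with distinguished basis
`θ¹, θ², θ̄¹, θ̄²` (indexed `0,1,2,3`): an element is given by its coefficients on the
basis monomials `θ_S` (`S ⊆ {0,1,2,3}`, factors in increasing index order). -/
abbrev Lam : Type := Finset (Fin 4) → ℂ

/-- The Koszul sign `(−1)^{#{j ∈ S : j < i}}`. -/
def ksign (i : Fin 4) (S : Finset (Fin 4)) : ℂ := (-1 : ℂ) ^ (S.filter (· < i)).card

/-- Left exterior multiplication `e_v` by the `i`-th basis vector, in coordinates. -/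
def eOp (i : Fin 4) (a : Lam) : Lam := fun S =>
  if i ∈ S then ksign i S * a (S.erase i) else 0

/-- The odd derivation `∂_v` dual to the `i`-th basis vector (`∂_v(w) = δ_{v,w}` on basis
vectors, graded Leibniz rule), in coordinates. -/
def dOp (i : Fin 4) (a : Lam) : Lam := fun S =>
  if i ∈ S then 0 else ksign i S * a (insert i S)

/-- The matrices `Γ⁰ = I`, `Γ¹ = diag(1,−1)`, `Γ² = ((0,1),(1,0))`, `Γ³ = ((0,−i),(i,0))`. -/
def Gam : Fin 4 → Matrix (Fin 2) (Fin 2) ℂ :=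
  ![!![1, 0; 0, 1], !![1, 0; 0, -1], !![0, 1; 1, 0], !![0, -Complex.I; Complex.I, 0]]

/-- Index of `θ^a` (for `a ∈ {1,2}`, i.e. `a : Fin 2`). -/
def θi (a : Fin 2) : Fin 4 := ⟨a.val, by have := a.isLt; omega⟩

/-- Index of `θ̄^a` (for `a ∈ {1,2}`, i.e. `a : Fin 2`). -/
def θbi (a : Fin 2) : Fin 4 := ⟨a.val + 2, by have := a.isLt; omega⟩

/-- The partial derivative `∂_μ` of a superfunction `f : ℝ⁴ → Λ`. -/
def pd (μ : Fin 4) (f : (Fin 4 → ℝ) → Lam) : (Fin 4 → ℝ) → Lam :=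
  fun x => fderiv ℝ f x (Pi.single μ 1)

/-- The supersymmetry generator `Q_a = ∂_{θ^a} + i Σ_{μ,b} Γ^μ_{ab} e_{θ̄^b} ∂_μ`. -/
def QOp (a : Fin 2) (f : (Fin 4 → ℝ) → Lam) : (Fin 4 → ℝ) → Lam :=
  fun x => dOp (θi a) (f x) +
    ∑ μ : Fin 4, ∑ b : Fin 2, (Complex.I * Gam μ a b) • eOp (θbi b) (pd μ f x)

/-- The supersymmetry generator `Q̄_b = ∂_{θ̄^b} + i Σ_{μ,a} Γ^μ_{ab} e_{θ^a} ∂_μ`. -/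
def QbOp (b : Fin 2) (f : (Fin 4 → ℝ) → Lam) : (Fin 4 → ℝ) → Lam :=
  fun x => dOp (θbi b) (f x) +
    ∑ μ : Fin 4, ∑ a : Fin 2, (Complex.I * Gam μ a b) • eOp (θi a) (pd μ f x)

/-- integer version of the sign -/
def ksz (i : Fin 4) (S : Finset (Fin 4)) : ℤ := (-1 : ℤ) ^ (S.filter (· < i)).card

theorem ksign_eq (i : Fin 4) (S : Finset (Fin 4)) : ksign i S = (ksz i S : ℂ) := by
  simp [ksign, ksz]

theorem ksz_ee : ∀ (i j : Fin 4) (S : Finset (Fin 4)), i ≠ j → i ∈ S → j ∈ S →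
    ksz i S * ksz j (S.erase i) = - (ksz j S * ksz i (S.erase j)) := by
  unfold ksz; decide

theorem ksz_dd : ∀ (i j : Fin 4) (S : Finset (Fin 4)), i ≠ j → i ∉ S → j ∉ S →
    ksz i S * ksz j (insert i S) = - (ksz j S * ksz i (insert j S)) := by
  unfold ksz; decide

theorem ksz_de : ∀ (i j : Fin 4) (S : Finset (Fin 4)), i ≠ j → i ∉ S → j ∈ S →
    ksz i S * ksz j (insert i S) = - (ksz j S * ksz i (S.erase j)) := by
  unfold ksz; decide

theorem ksz_in : ∀ (i : Fin 4) (S : Finset (Fin 4)), ksz i S * ksz i (insert i S) = 1 := by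
  unfold ksz; decide

theorem ksz_er : ∀ (i : Fin 4) (S : Finset (Fin 4)), ksz i S * ksz i (S.erase i) = 1 := by
  unfold ksz; decide

/-- `eOp` as a linear map -/
def eL (i : Fin 4) : Lam →ₗ[ℂ] Lam where
  toFun := eOp i
  map_add' a b := by
    funext S; by_cases h : i ∈ S <;> simp [eOp, h, mul_add]
  map_smul' c a := by
    funext S; by_cases h : i ∈ S <;> simp [eOp, h, mul_left_comm]

/-- `dOp` as a linear map -/
def dL (i : Fin 4) : Lam →ₗ[ℂ] Lam where
  toFun := dOp i
  map_add' a b := by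
    funext S; by_cases h : i ∈ S <;> simp [dOp, h, mul_add]
  map_smul' c a := by
    funext S; by_cases h : i ∈ S <;> simp [dOp, h, mul_left_comm]

theorem eL_eL (i j : Fin 4) (v : Lam) : eL i (eL j v) + eL j (eL i v) = 0 := by
  funext S
  change eOp i (eOp j v) S + eOp j (eOp i v) S = 0
  by_cases hij : i = j
  · subst hij; simp [eOp]
  by_cases hi : i ∈ S <;> by_cases hj : j ∈ S <;>
    simp [eOp, hi, hj]
  rw [if_neg (Ne.symm hij), if_neg hij, Finset.erase_right_comm (a := j) (b := i)]
  have h := congrArg (Int.cast : ℤ → ℂ) (ksz_ee i j S hij hi hj)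
  push_cast [← ksign_eq] at h
  linear_combination v ((S.erase i).erase j) * h

theorem dL_dL (i j : Fin 4) (v : Lam) : dL i (dL j v) + dL j (dL i v) = 0 := by
  funext S
  change dOp i (dOp j v) S + dOp j (dOp i v) S = 0
  by_cases hij : i = j
  · subst hij; simp [dOp]
  by_cases hi : i ∈ S <;> by_cases hj : j ∈ S <;>
    simp [dOp, hi, hj]
  rw [if_neg (Ne.symm hij), if_neg hij, Finset.insert_comm j i]
  have h := congrArg (Int.cast : ℤ → ℂ) (ksz_dd i j S hij hi hj)
  push_cast [← ksign_eq] at h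
  linear_combination v (insert i (insert j S)) * h

theorem dL_eL (i j : Fin 4) (v : Lam) :
    dL i (eL j v) + eL j (dL i v) = if i = j then v else 0 := by
  funext S
  change dOp i (eOp j v) S + eOp j (dOp i v) S = _
  by_cases hij : i = j
  · subst hij
    have h1 := congrArg (Int.cast : ℤ → ℂ) (ksz_in i S)
    have h2 := congrArg (Int.cast : ℤ → ℂ) (ksz_er i S)
    push_cast [← ksign_eq] at h1 h2
    by_cases hi : i ∈ S
    · simp [dOp, eOp, hi, ← mul_assoc, h2]
    · simp [dOp, eOp, hi, ← mul_assoc, h1]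
  · have hji : ¬ j = i := fun h => hij h.symm
    by_cases hi : i ∈ S <;> by_cases hj : j ∈ S <;>
      simp [eOp, dOp, hi, hj, hij, hji]
    rw [Finset.erase_insert_of_ne hij]
    have h := congrArg (Int.cast : ℤ → ℂ) (ksz_de i j S hij hi hj)
    push_cast [← ksign_eq] at h
    linear_combination v (insert i (S.erase j)) * h

/-- first order operator with constant coefficients -/
def TOp (A : Lam →ₗ[ℂ] Lam) (B : Fin 4 → Lam →ₗ[ℂ] Lam) (f : (Fin 4 → ℝ) → Lam) :
    (Fin 4 → ℝ) → Lam :=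
  fun x => A (f x) + ∑ μ, B μ (pd μ f x)

theorem diff_lin (L : Lam →ₗ[ℂ] Lam) {g : (Fin 4 → ℝ) → Lam} {x : Fin 4 → ℝ}
    (hg : DifferentiableAt ℝ g x) : DifferentiableAt ℝ (fun y => L (g y)) x :=
  ((L.restrictScalars ℝ).toContinuousLinearMap.differentiableAt).comp x hg

theorem pd_lin (L : Lam →ₗ[ℂ] Lam) {g : (Fin 4 → ℝ) → Lam} {x : Fin 4 → ℝ}
    (hg : DifferentiableAt ℝ g x) (μ : Fin 4) :
    pd μ (fun y => L (g y)) x = L (pd μ g x) := by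
  have h := ((L.restrictScalars ℝ).toContinuousLinearMap.hasFDerivAt (x := g x)).comp x
    hg.hasFDerivAt
  have h2 : fderiv ℝ (fun y => L (g y)) x = _ := h.fderiv
  unfold pd
  rw [h2]
  rfl

theorem pd_smooth {f : (Fin 4 → ℝ) → Lam} (hf : ContDiff ℝ (⊤ : ℕ∞) f) (μ : Fin 4) :
    ContDiff ℝ (⊤ : ℕ∞) (pd μ f) := by
  have h : ContDiff ℝ (⊤ : ℕ∞) (fderiv ℝ f) := hf.fderiv_right (by simp)
  exact h.clm_apply contDiff_const

theorem diff_of {f : (Fin 4 → ℝ) → Lam} (hf : ContDiff ℝ (⊤ : ℕ∞) f) (x : Fin 4 → ℝ) :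
    DifferentiableAt ℝ f x :=
  (hf.differentiable (by simp)).differentiableAt

theorem pd_comm {f : (Fin 4 → ℝ) → Lam} (hf : ContDiff ℝ (⊤ : ℕ∞) f) (μ ν : Fin 4)
    (x : Fin 4 → ℝ) : pd μ (pd ν f) x = pd ν (pd μ f) x := by
  have h : ContDiff ℝ (⊤ : ℕ∞) (fderiv ℝ f) := hf.fderiv_right (by simp)
  have hd : DifferentiableAt ℝ (fderiv ℝ f) x :=
    (h.differentiable (by simp)).differentiableAt
  have key : ∀ u w : Fin 4 → ℝ,
      fderiv ℝ (fun y => fderiv ℝ f y w) x u = fderiv ℝ (fderiv ℝ f) x u w := by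
    intro u w
    rw [fderiv_clm_apply hd (differentiableAt_const w)]
    simp
  have hs : IsSymmSndFDerivAt ℝ f x :=
    (hf.contDiffAt).isSymmSndFDerivAt (by
      rw [minSmoothness_of_isRCLikeNormedField]
      exact WithTop.coe_le_coe.mpr (le_top : (2 : ℕ∞) ≤ ⊤))
  change fderiv ℝ (fun y => fderiv ℝ f y _) x _ = fderiv ℝ (fun y => fderiv ℝ f y _) x _
  rw [key, key]
  exact hs _ _

theorem pd_TOp (A : Lam →ₗ[ℂ] Lam) (B : Fin 4 → Lam →ₗ[ℂ] Lam) {f : (Fin 4 → ℝ) → Lam}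
    (hf : ContDiff ℝ (⊤ : ℕ∞) f) (ν : Fin 4) (x : Fin 4 → ℝ) :
    pd ν (TOp A B f) x = A (pd ν f x) + ∑ μ, B μ (pd ν (pd μ f) x) := by
  have h1 := diff_lin A (diff_of hf x)
  have h2 : ∀ μ ∈ Finset.univ, DifferentiableAt ℝ (fun y => B μ (pd μ f y)) x :=
    fun μ _ => diff_lin (B μ) (diff_of (pd_smooth hf μ) x)
  have h3 : fderiv ℝ (TOp A B f) x = fderiv ℝ (fun y => A (f y)) x +
      ∑ μ, fderiv ℝ (fun y => B μ (pd μ f y)) x := by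
    rw [← fderiv_fun_sum h2, ← fderiv_fun_add h1 (DifferentiableAt.fun_sum h2)]
    rfl
  have h4 : pd ν (TOp A B f) x = pd ν (fun y => A (f y)) x +
      ∑ μ, pd ν (fun y => B μ (pd μ f y)) x := by
    simp only [pd] at h3 ⊢
    rw [h3]
    simp
  rw [h4, pd_lin A (diff_of hf x)]
  congr 1
  exact Finset.sum_congr rfl fun μ _ => pd_lin (B μ) (diff_of (pd_smooth hf μ) x) ν

theorem TOp_pd (A : Lam →ₗ[ℂ] Lam) (B : Fin 4 → Lam →ₗ[ℂ] Lam) {f : (Fin 4 → ℝ) → Lam}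
    (hf : ContDiff ℝ (⊤ : ℕ∞) f) (ν : Fin 4) (x : Fin 4 → ℝ) :
    TOp A B (pd ν f) x = pd ν (TOp A B f) x := by
  rw [pd_TOp A B hf]
  unfold TOp
  congr 1
  exact Finset.sum_congr rfl fun μ _ => by rw [pd_comm hf]

theorem TOp_anti (A A' : Lam →ₗ[ℂ] Lam) (B B' : Fin 4 → Lam →ₗ[ℂ] Lam) (c : Fin 4 → ℂ)
    (hA : ∀ v, A (A' v) + A' (A v) = 0)
    (hB : ∀ μ ν v, B μ (B' ν v) + B' ν (B μ v) = 0)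
    (hAB : ∀ μ v, (A (B' μ v) + B' μ (A v)) + (A' (B μ v) + B μ (A' v)) = c μ • v)
    {f : (Fin 4 → ℝ) → Lam} (hf : ContDiff ℝ (⊤ : ℕ∞) f) (x : Fin 4 → ℝ) :
    TOp A B (TOp A' B' f) x + TOp A' B' (TOp A B f) x = ∑ μ, c μ • pd μ f x := by
  have e : ∀ (A A' : Lam →ₗ[ℂ] Lam) (B B' : Fin 4 → Lam →ₗ[ℂ] Lam),
      TOp A B (TOp A' B' f) x = A (A' (f x)) + ∑ μ, A (B' μ (pd μ f x)) +
        (∑ μ, B μ (A' (pd μ f x)) + ∑ μ, ∑ ν, B μ (B' ν (pd μ (pd ν f) x))) := by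
    intro A A' B B'
    rw [← Finset.sum_add_distrib]
    conv_lhs => unfold TOp
    congr 1
    · simp
    · refine Finset.sum_congr rfl fun μ _ => ?_
      have := pd_TOp A' B' hf μ x
      unfold TOp at this
      rw [this]
      simp
  rw [e, e]
  have h2 : ∑ μ, ∑ ν, B μ (B' ν (pd μ (pd ν f) x)) +
      ∑ μ, ∑ ν, B' μ (B ν (pd μ (pd ν f) x)) = 0 := by
    rw [Finset.sum_comm (f := fun μ ν => B' μ (B ν (pd μ (pd ν f) x))),
      ← Finset.sum_add_distrib]
    refine Finset.sum_eq_zero fun μ _ => ?_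
    rw [← Finset.sum_add_distrib]
    refine Finset.sum_eq_zero fun ν _ => ?_
    rw [pd_comm hf ν μ, hB]
  have h1 : ∑ μ, c μ • pd μ f x = (∑ μ, A (B' μ (pd μ f x)) + ∑ μ, B' μ (A (pd μ f x))) +
      (∑ μ, A' (B μ (pd μ f x)) + ∑ μ, B μ (A' (pd μ f x))) := by
    simp only [← Finset.sum_add_distrib, hAB]
  rw [h1]
  have h0 := hA (f x)
  linear_combination (exp := 1) h0 + h2

/-- coefficients of `Q_a` -/
def BQ (a : Fin 2) (μ : Fin 4) : Lam →ₗ[ℂ] Lam :=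
  ∑ b : Fin 2, (Complex.I * Gam μ a b) • eL (θbi b)

/-- coefficients of `Q̄_b` -/
def BQb (b : Fin 2) (μ : Fin 4) : Lam →ₗ[ℂ] Lam :=
  ∑ a : Fin 2, (Complex.I * Gam μ a b) • eL (θi a)

theorem QOp_eq (a : Fin 2) : QOp a = TOp (dL (θi a)) (BQ a) := by
  funext f x
  simp only [QOp, TOp, BQ, LinearMap.sum_apply, LinearMap.smul_apply]
  rfl

theorem QbOp_eq (b : Fin 2) : QbOp b = TOp (dL (θbi b)) (BQb b) := by
  funext f x
  simp only [QbOp, TOp, BQb, LinearMap.sum_apply, LinearMap.smul_apply]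
  rfl

/-- anticommutators of linear combinations -/
theorem lin_anti (A : Lam →ₗ[ℂ] Lam) (k : Fin 2 → ℂ) (E : Fin 2 → Lam →ₗ[ℂ] Lam) (v : Lam) :
    A ((∑ b, k b • E b) v) + (∑ b, k b • E b) (A v) =
      ∑ b, k b • (A (E b v) + E b (A v)) := by
  simp only [LinearMap.sum_apply, LinearMap.smul_apply, map_sum, map_smul, smul_add,
    Finset.sum_add_distrib]

theorem sum_anti (k l : Fin 2 → ℂ) (p q : Fin 2 → Fin 4) (v : Lam) :
    (∑ b, k b • eL (p b)) ((∑ b, l b • eL (q b)) v) +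
      (∑ b, l b • eL (q b)) ((∑ b, k b • eL (p b)) v) = 0 := by
  rw [lin_anti]
  refine Finset.sum_eq_zero fun b _ => ?_
  rw [add_comm, lin_anti]
  simp [eL_eL]

theorem θ_ne (a b : Fin 2) : θi a ≠ θbi b := by revert a b; decide

theorem θi_inj (a b : Fin 2) : θi a = θi b ↔ a = b := by revert a b; decide

theorem θbi_inj (a b : Fin 2) : θbi a = θbi b ↔ a = b := by revert a b; decide

/-- the supersymmetry generators satisfy, on smooth superfunctions
`f : ℝ⁴ → Λ`: (i) `{Q_a, Q_b} = 0` and `{Q̄_a, Q̄_b} = 0`;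
(ii) `{Q_a, Q̄_b} = 2i Σ_μ Γ^μ_{ab} ∂_μ`; (iii) each `Q_a`, `Q̄_b` commutes with each `∂_μ`. -/
theorem stmt8 (f : (Fin 4 → ℝ) → Lam) (hf : ContDiff ℝ (⊤ : ℕ∞) f) :
    -- (i)
    (∀ a b : Fin 2, ∀ x, QOp a (QOp b f) x + QOp b (QOp a f) x = 0) ∧
    (∀ a b : Fin 2, ∀ x, QbOp a (QbOp b f) x + QbOp b (QbOp a f) x = 0) ∧
    -- (ii)
    (∀ a b : Fin 2, ∀ x, QOp a (QbOp b f) x + QbOp b (QOp a f) x =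
      ∑ μ : Fin 4, (2 * Complex.I * Gam μ a b) • pd μ f x) ∧
    -- (iii)
    (∀ (a : Fin 2) (μ : Fin 4), ∀ x, QOp a (pd μ f) x = pd μ (QOp a f) x) ∧
    (∀ (b : Fin 2) (μ : Fin 4), ∀ x, QbOp b (pd μ f) x = pd μ (QbOp b f) x) := by
  simp only [QOp_eq, QbOp_eq]
  refine ⟨fun a b x => ?_, fun a b x => ?_, fun a b x => ?_,
    fun a μ x => TOp_pd _ _ hf μ x, fun b μ x => TOp_pd _ _ hf μ x⟩
  · rw [TOp_anti (c := fun _ => 0) (hA := dL_dL _ _) (hB := ?_) (hAB := ?_) (hf := hf)]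
    · simp
    · exact fun _ _ _ => sum_anti _ _ _ _ _
    · intro μ v
      unfold BQ
      rw [lin_anti, lin_anti]
      simp [dL_eL, θ_ne]
  · rw [TOp_anti (c := fun _ => 0) (hA := dL_dL _ _) (hB := ?_) (hAB := ?_) (hf := hf)]
    · simp
    · exact fun _ _ _ => sum_anti _ _ _ _ _
    · intro μ v
      unfold BQb
      rw [lin_anti, lin_anti]
      simp [dL_eL, (θ_ne _ _).symm]
  · refine TOp_anti _ _ _ _ (fun μ => 2 * Complex.I * Gam μ a b) (dL_dL _ _)
      (fun _ _ _ => sum_anti _ _ _ _ _) ?_ hf x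
    intro μ v
    -- unfolded by unification
    rw [lin_anti, lin_anti]
    simp only [dL_eL, θi_inj, θbi_inj, smul_ite, smul_zero, Finset.sum_ite_eq,
      Finset.mem_univ, if_true, ← add_smul]
    congr 1
    ring


end
end

section
/- Let W := ⋀(ℂ²) ⊗ ⋀(ℂ²), where the first exterior algebra has distinguished basis τ¹, τ² and the second has distinguished basis τ̄¹, τ̄², and let g_{ab} ∈ ℂ (a,b ∈ {1,2}) be arbitrary constants. For b ∈ {1,2} let e_b be left exterior multiplication by τ̄^b on the second factor, and let i_b be the linear map on the first factor with i_b(1) = 0, i_b(τ^c) = g_{cb} for c ∈ {1,2}, and i_b(τ¹∧τ²) = g_{1b}·τ² − g_{2b}·τ¹. Define d̄_b := Id ⊗ e_b + i_b ⊗ Id ∈ End(W). Then the chiral subspace W_chiral := Ker d̄₁ ∩ Ker d̄₂ consists exactly of the elements f of the form f = (g₁₁g₂₂ − g₂₁g₁₂)φ·(1⊗1) + (g₁₂ψ₁ + g₂₂ψ₂)·(1⊗τ̄¹) + (−g₁₁ψ₁ − g₂₁ψ₂)·(1⊗τ̄²) + F·(1⊗(τ̄¹∧τ̄²)) − g₂₂φ·(τ¹⊗τ̄¹)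 + g₂₁φ·(τ¹⊗τ̄²) + g₁₂φ·(τ²⊗τ̄¹) − g₁₁φ·(τ²⊗τ̄²) + ψ₁·(τ¹⊗(τ̄¹∧τ̄²)) + ψ₂·(τ²⊗(τ̄¹∧τ̄²)) + φ·((τ¹∧τ²)⊗(τ̄¹∧τ̄²)) for (uniquely determined) complex numbers φ, ψ₁, ψ₂, F; in particular W_chiral is a 4-dimensional subspace of the 16-dimensional space W. -/
noncomputable section

/-- Coordinates of `W = ⋀(ℂ²) ⊗ ⋀(ℂ²)`, where the first exterior algebra has distinguished
basis `τ¹, τ²` and the second has distinguished basis `τ̄¹, τ̄²` (both indexed by `Fin 2`):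
an element is given by its coefficients on the basis `τ_S ⊗ τ̄_T` (`S, T ⊆ {0,1}`). -/
abbrev W12 : Type := Finset (Fin 2) × Finset (Fin 2) → ℂ

/-- The basis element `τ_S ⊗ τ̄_T` of `W`. -/
def bW (S T : Finset (Fin 2)) : W12 := fun p => if p = (S, T) then 1 else 0

/-- The Koszul sign `(−1)^{#{j ∈ T : j < b}}`. -/
def ksign2 (b : Fin 2) (T : Finset (Fin 2)) : ℂ := (-1 : ℂ) ^ (T.filter (· < b)).card

/-- `Id ⊗ e_{τ̄^b}`: left exterior multiplication by `τ̄^b` on the second factor. -/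
def idTensE (b : Fin 2) (f : W12) : W12 := fun p =>
  if b ∈ p.2 then ksign2 b p.2 * f (p.1, p.2.erase b) else 0

/-- `i_b ⊗ Id`: the map on the first factor with `i_b(1) = 0`, `i_b(τ^c) = g_{cb}` and
`i_b(τ¹∧τ²) = g_{1b}·τ² − g_{2b}·τ¹` (here `g : Fin 2 → Fin 2 → ℂ` is `0`-indexed). -/
def iTensId (g : Fin 2 → Fin 2 → ℂ) (b : Fin 2) (f : W12) : W12 := fun p =>
  if p.1 = ∅ then g 0 b * f ({0}, p.2) + g 1 b * f ({1}, p.2)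
  else if p.1 = {0} then -(g 1 b) * f ({0, 1}, p.2)
  else if p.1 = {1} then g 0 b * f ({0, 1}, p.2)
  else 0

/-- The operator `d̄_b := Id ⊗ e_{τ̄^b} + i_b ⊗ Id` on `W`. -/
def dbarOp (g : Fin 2 → Fin 2 → ℂ) (b : Fin 2) (f : W12) : W12 :=
  fun p => idTensE b f p + iTensId g b f p

/-- The general chiral element of `W` with parameters `φ, ψ₁, ψ₂, F ∈ ℂ`. -/
def chiralElt (g : Fin 2 → Fin 2 → ℂ) (φ ψ₁ ψ₂ F : ℂ) : W12 :=
  ((g 0 0 * g 1 1 - g 1 0 * g 0 1) * φ) • bW ∅ ∅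
  + (g 0 1 * ψ₁ + g 1 1 * ψ₂) • bW ∅ {0}
  + (-(g 0 0) * ψ₁ - g 1 0 * ψ₂) • bW ∅ {1}
  + F • bW ∅ {0, 1}
  + (-(g 1 1) * φ) • bW {0} {0}
  + (g 1 0 * φ) • bW {0} {1}
  + (g 0 1 * φ) • bW {1} {0}
  + (-(g 0 0) * φ) • bW {1} {1}
  + ψ₁ • bW {0} {0, 1}
  + ψ₂ • bW {1} {0, 1}
  + φ • bW {0, 1} {0, 1}

theorem forall_fs2 (P : Finset (Fin 2) → Prop) :
    (∀ S, P S) ↔ P ∅ ∧ P {0} ∧ P {1} ∧ P {0, 1} := by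
  constructor
  · intro h
    exact ⟨h _, h _, h _, h _⟩
  · rintro ⟨h0, h1, h2, h3⟩ S
    have : S = ∅ ∨ S = {0} ∨ S = {1} ∨ S = {0, 1} := by
      revert S
      decide
    rcases this with rfl | rfl | rfl | rfl <;> assumption

theorem w12_ext (f h : W12) : f = h ↔ ∀ S T, f (S, T) = h (S, T) := by
  constructor
  · rintro rfl S T
    rfl
  · intro H
    funext ⟨S, T⟩
    exact H S T

theorem fs_e1 : (({0} : Finset (Fin 2)) = ∅) = False := by decide
theorem fs_e2 : (({1} : Finset (Fin 2)) = ∅) = False := by decide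
theorem fs_e3 : (({0, 1} : Finset (Fin 2)) = ∅) = False := by decide
theorem fs_e4 : ((∅ : Finset (Fin 2)) = {0}) = False := by decide
theorem fs_e5 : ((∅ : Finset (Fin 2)) = {1}) = False := by decide
theorem fs_e6 : ((∅ : Finset (Fin 2)) = {0, 1}) = False := by decide
theorem fs_e7 : (({0} : Finset (Fin 2)) = {1}) = False := by decide
theorem fs_e8 : (({1} : Finset (Fin 2)) = {0}) = False := by decide
theorem fs_e9 : (({0} : Finset (Fin 2)) = {0, 1}) = False := by decide
theorem fs_e10 : (({1} : Finset (Fin 2)) = {0, 1}) = False := by decide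
theorem fs_e11 : (({0, 1} : Finset (Fin 2)) = {0}) = False := by decide
theorem fs_e12 : (({0, 1} : Finset (Fin 2)) = {1}) = False := by decide

theorem fs_m1 : ((0 : Fin 2) ∈ (∅ : Finset (Fin 2))) = False := by decide
theorem fs_m2 : ((1 : Fin 2) ∈ (∅ : Finset (Fin 2))) = False := by decide
theorem fs_m3 : ((0 : Fin 2) ∈ ({0} : Finset (Fin 2))) = True := by decide
theorem fs_m4 : ((1 : Fin 2) ∈ ({0} : Finset (Fin 2))) = False := by decide
theorem fs_m5 : ((0 : Fin 2) ∈ ({1} : Finset (Fin 2))) = False := by decide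
theorem fs_m6 : ((1 : Fin 2) ∈ ({1} : Finset (Fin 2))) = True := by decide
theorem fs_m7 : ((0 : Fin 2) ∈ ({0, 1} : Finset (Fin 2))) = True := by decide
theorem fs_m8 : ((1 : Fin 2) ∈ ({0, 1} : Finset (Fin 2))) = True := by decide

theorem fs_r1 : ({0} : Finset (Fin 2)).erase 0 = ∅ := by decide
theorem fs_r2 : ({1} : Finset (Fin 2)).erase 1 = ∅ := by decide
theorem fs_r3 : ({0, 1} : Finset (Fin 2)).erase 0 = {1} := by decide
theorem fs_r4 : ({0, 1} : Finset (Fin 2)).erase 1 = {0} := by decide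

theorem ks1 : ksign2 0 {0} = 1 := by
  have : (({0} : Finset (Fin 2)).filter (· < 0)).card = 0 := by decide
  simp only [ksign2, this, pow_zero]
theorem ks2 : ksign2 1 {1} = 1 := by
  have : (({1} : Finset (Fin 2)).filter (· < 1)).card = 0 := by decide
  simp only [ksign2, this, pow_zero]
theorem ks3 : ksign2 0 {0, 1} = 1 := by
  have : (({0, 1} : Finset (Fin 2)).filter (· < 0)).card = 0 := by decide
  simp only [ksign2, this, pow_zero]
theorem ks4 : ksign2 1 {0, 1} = -1 := by
  have : (({0, 1} : Finset (Fin 2)).filter (· < 1)).card = 1 := by decide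
  simp only [ksign2, this, pow_one]

/-- Coordinates of the general chiral element. -/
theorem eq_chiral_iff (g : Fin 2 → Fin 2 → ℂ) (f : W12) (a b c d : ℂ) :
    f = chiralElt g a b c d ↔
      (f (∅, ∅) = (g 0 0 * g 1 1 - g 1 0 * g 0 1) * a ∧
        f (∅, {0}) = g 0 1 * b + g 1 1 * c ∧
        f (∅, {1}) = -(g 0 0) * b - g 1 0 * c ∧ f (∅, {0, 1}) = d) ∧
      (f ({0}, ∅) = 0 ∧ f ({0}, {0}) = -(g 1 1) * a ∧
        f ({0}, {1}) = g 1 0 * a ∧ f ({0}, {0, 1}) = b) ∧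
      (f ({1}, ∅) = 0 ∧ f ({1}, {0}) = g 0 1 * a ∧
        f ({1}, {1}) = -(g 0 0) * a ∧ f ({1}, {0, 1}) = c) ∧
      (f ({0, 1}, ∅) = 0 ∧ f ({0, 1}, {0}) = 0 ∧
        f ({0, 1}, {1}) = 0 ∧ f ({0, 1}, {0, 1}) = a) := by
  rw [w12_ext, forall_fs2]
  simp only [forall_fs2]
  simp only [chiralElt, bW, Pi.add_apply, Pi.smul_apply, smul_eq_mul, Prod.mk.injEq,
    fs_e1, fs_e2, fs_e3, fs_e4, fs_e5, fs_e6, fs_e7, fs_e8, fs_e9, fs_e10, fs_e11, fs_e12,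
    and_false, false_and, and_self, if_true, if_false, mul_one, mul_zero, add_zero, zero_add]

theorem dbar_iff (g : Fin 2 → Fin 2 → ℂ) (f : W12) :
    (dbarOp g 0 f = 0 ∧ dbarOp g 1 f = 0) ↔
      f = chiralElt g (f ({0, 1}, {0, 1})) (f ({0}, {0, 1})) (f ({1}, {0, 1}))
        (f (∅, {0, 1})) := by
  rw [eq_chiral_iff, w12_ext, w12_ext, forall_fs2, forall_fs2]
  simp only [forall_fs2]
  simp only [dbarOp, idTensE, iTensId, Pi.zero_apply,
    fs_e1, fs_e2, fs_e3, fs_e4, fs_e5, fs_e6, fs_e7, fs_e8, fs_e9, fs_e10, fs_e11, fs_e12,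
    fs_m1, fs_m2, fs_m3, fs_m4, fs_m5, fs_m6, fs_m7, fs_m8, fs_r1, fs_r2, fs_r3, fs_r4,
    ks1, ks2, ks3, ks4, if_true, if_false, mul_one, mul_zero, add_zero, zero_add, one_mul]
  generalize f (∅, ∅) = x00
  generalize f (∅, {0}) = x01
  generalize f (∅, {1}) = x02
  generalize f (∅, {0, 1}) = x03
  generalize f ({0}, ∅) = x10
  generalize f ({0}, {0}) = x11
  generalize f ({0}, {1}) = x12
  generalize f ({0}, {0, 1}) = x13
  generalize f ({1}, ∅) = x20
  generalize f ({1}, {0}) = x21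
  generalize f ({1}, {1}) = x22
  generalize f ({1}, {0, 1}) = x23
  generalize f ({0, 1}, ∅) = x30
  generalize f ({0, 1}, {0}) = x31
  generalize f ({0, 1}, {1}) = x32
  generalize f ({0, 1}, {0, 1}) = x33
  constructor
  · rintro ⟨⟨⟨a1, a2, a3, a4⟩, ⟨a5, a6, a7, a8⟩, ⟨b1, b2, b3, b4⟩, ⟨b5, b6, b7, b8⟩⟩,
      ⟨⟨c1, c2, c3, c4⟩, ⟨c5, c6, c7, c8⟩, ⟨d1, d2, d3, d4⟩, ⟨d5, d6, d7, d8⟩⟩⟩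
    grind
  · rintro ⟨⟨a1, a2, a3, a4⟩, ⟨a5, a6, a7, a8⟩, ⟨b1, b2, b3, b4⟩, ⟨b5, b6, b7, b8⟩⟩
    subst_vars
    refine ⟨⟨⟨?_, ?_, ?_, ?_⟩, ⟨?_, ?_, ?_, ?_⟩, ⟨?_, ?_, ?_, ?_⟩, ⟨?_, ?_, ?_, ?_⟩⟩,
      ⟨⟨?_, ?_, ?_, ?_⟩, ⟨?_, ?_, ?_, ?_⟩, ⟨?_, ?_, ?_, ?_⟩, ⟨?_, ?_, ?_, ?_⟩⟩⟩ <;>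
      first | trivial | ring | grind

theorem chiral_coords (g : Fin 2 → Fin 2 → ℂ) (f : W12) (a b c d : ℂ)
    (h : f = chiralElt g a b c d) :
    f ({0, 1}, {0, 1}) = a ∧ f ({0}, {0, 1}) = b ∧ f ({1}, {0, 1}) = c ∧
      f (∅, {0, 1}) = d := by
  rw [eq_chiral_iff] at h
  tauto

theorem dbar_iff_exists (g : Fin 2 → Fin 2 → ℂ) (f : W12) :
    (dbarOp g 0 f = 0 ∧ dbarOp g 1 f = 0) ↔ ∃ a b c d, f = chiralElt g a b c d := by
  rw [dbar_iff]
  constructor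
  · intro h
    exact ⟨_, _, _, _, h⟩
  · rintro ⟨a, b, c, d, h⟩
    obtain ⟨h1, h2, h3, h4⟩ := chiral_coords g f a b c d h
    rw [h1, h2, h3, h4]
    exact h

/-- The four basis vectors of the chiral subspace. -/
def chiralBasis (g : Fin 2 → Fin 2 → ℂ) : Fin 4 → W12 :=
  ![chiralElt g 1 0 0 0, chiralElt g 0 1 0 0, chiralElt g 0 0 1 0, chiralElt g 0 0 0 1]

theorem chiral_comb (g : Fin 2 → Fin 2 → ℂ) (c : Fin 4 → ℂ) :
    ∑ i, c i • chiralBasis g i = chiralElt g (c 0) (c 1) (c 2) (c 3) := by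
  funext p
  simp [Fin.sum_univ_four, chiralBasis, chiralElt]
  ring

/-- the chiral subspace `W_chiral = Ker d̄₁ ∩ Ker d̄₂` of
`W = ⋀(ℂ²) ⊗ ⋀(ℂ²)` consists exactly of the elements `chiralElt g φ ψ₁ ψ₂ F` for uniquely
determined complex numbers `φ, ψ₁, ψ₂, F`; in particular `W_chiral` is a `4`-dimensional
subspace of the `16`-dimensional space `W`. -/
theorem stmt12 (g : Fin 2 → Fin 2 → ℂ) :
    -- the characterization of the chiral subspace
    (∀ f : W12, (dbarOp g 0 f = 0 ∧ dbarOp g 1 f = 0) ↔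
      ∃! c : ℂ × ℂ × ℂ × ℂ, f = chiralElt g c.1 c.2.1 c.2.2.1 c.2.2.2) ∧
    -- `W` is 16-dimensional
    Module.finrank ℂ W12 = 16 ∧
    -- `W_chiral` is a 4-dimensional subspace
    (∃ v : Fin 4 → W12, LinearIndependent ℂ v ∧
      ∀ f : W12, (dbarOp g 0 f = 0 ∧ dbarOp g 1 f = 0) ↔
        f ∈ Submodule.span ℂ (Set.range v)) := by
  refine ⟨?_, ?_, chiralBasis g, ?_, ?_⟩
  · intro f
    rw [dbar_iff_exists]
    constructor
    · rintro ⟨a, b, c, d, h⟩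
      refine ⟨(a, b, c, d), h, ?_⟩
      rintro ⟨a', b', c', d'⟩ h'
      obtain ⟨h1, h2, h3, h4⟩ := chiral_coords g f a b c d h
      obtain ⟨k1, k2, k3, k4⟩ := chiral_coords g f a' b' c' d' h'
      rw [← h1, ← h2, ← h3, ← h4, ← k1, ← k2, ← k3, ← k4]
    · rintro ⟨⟨a, b, c, d⟩, h, -⟩
      exact ⟨a, b, c, d, h⟩
  · rw [Module.finrank_fintype_fun_eq_card]
    rfl
  · rw [Fintype.linearIndependent_iff]
    intro c hc
    rw [chiral_comb] at hc
    obtain ⟨h1, h2, h3, h4⟩ := chiral_coords g 0 _ _ _ _ hc.symm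
    intro i
    fin_cases i
    · exact h1.symm
    · exact h2.symm
    · exact h3.symm
    · exact h4.symm
  · intro f
    rw [dbar_iff_exists, Submodule.mem_span_range_iff_exists_fun]
    constructor
    · rintro ⟨a, b, c, d, h⟩
      refine ⟨![a, b, c, d], ?_⟩
      rw [chiral_comb, h]
      rfl
    · rintro ⟨c, hc⟩
      rw [chiral_comb] at hc
      exact ⟨_, _, _, _, hc.symm⟩

end
end

section
/- With the notation of the context, the odd Fourier transform F_odd : ⋀Θ → ⋀T acts on the monomial basis of ⋀Θ as follows (for a, b ∈ {1,2}): F_odd(1) = τ¹∧τ²∧τ̄¹∧τ̄²; F_odd(θ^a) = i·τ^a∧τ̄¹∧τ̄²; F_odd(θ̄^a) = i·τ¹∧τ²∧τ̄^a; F_odd(θ¹∧θ²) = τ̄¹∧τ̄²; F_odd(θ̄¹∧θ̄²) = τ¹∧τ²; F_odd(θ^a∧θ̄^b) = −τ^a∧τ̄^b; F_odd(θ¹∧θ²∧θ̄^a) = i·τ̄^a; F_odd(θ^a∧θ̄¹∧θ̄²) = i·τ^a; F_odd(θ¹∧θ²∧θ̄¹∧θ̄²) = 1. -/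
noncomputable section

/-- Coordinates of the exterior algebra `⋀(ℂ⁸)` with distinguished basis
`τ¹, τ², τ̄¹, τ̄², θ¹, θ², θ̄¹, θ̄²` (indexed `0,…,7`): an element is given by its
coefficients on the basis monomials `e_S` (`S ⊆ {0,…,7}`, factors in increasing index
order). Elements supported on subsets of `{0,1,2,3}` form `⋀T`, and elements supported
on subsets of `{4,5,6,7}` form `⋀Θ`. -/
abbrev Lam8 : Type := Finset (Fin 8) → ℂ

/-- The basis monomial `e_S` of `⋀(ℂ⁸)`. -/
def E8 (S : Finset (Fin 8)) : Lam8 := fun T => if T = S then 1 else 0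

/-- The Koszul sign `(−1)^{#{(a,b) ∈ A×B : b < a}}` with `e_A ∧ e_B = ± e_{A∪B}`. -/
def kz (A B : Finset (Fin 8)) : ℂ := (-1 : ℂ) ^ (∑ a ∈ A, (B.filter (· < a)).card)

/-- The wedge product of `⋀(ℂ⁸)`, in coordinates. -/
def wedge (f g : Lam8) : Lam8 := fun S =>
  ∑ A ∈ S.powerset, kz A (S \ A) * f A * g (S \ A)

/-- The Berezin integral `⋀(ℂ⁸) → ⋀T`: the coefficient of the top monomial
`θ¹∧θ²∧θ̄¹∧θ̄²` in the decomposition `Σ_I α_I ∧ θ_I`, `α_I ∈ ⋀T`. -/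
def Ber (f : Lam8) : Lam8 := fun S =>
  if S ⊆ ({0, 1, 2, 3} : Finset (Fin 8)) then f (S ∪ ({4, 5, 6, 7} : Finset (Fin 8))) else 0

/-- The factor `1 − i·τ¹∧θ² + i·τ²∧θ¹ + τ¹∧τ²∧θ¹∧θ²` of the Fourier kernel. -/
def Kplus : Lam8 :=
  E8 ∅ - Complex.I • E8 {0, 5} + Complex.I • E8 {1, 4} + E8 {0, 1, 4, 5}

/-- The factor `1 − i·τ̄¹∧θ̄² + i·τ̄²∧θ̄¹ + τ̄¹∧τ̄²∧θ̄¹∧θ̄²` of the Fourier kernel. -/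
def Kminus : Lam8 :=
  E8 ∅ - Complex.I • E8 {2, 7} + Complex.I • E8 {3, 6} + E8 {2, 3, 6, 7}

/-- The Fourier kernel `K`, the expansion of `exp(−i(ε₊(τ,θ) + ε₋(τ̄,θ̄)))`. -/
def Kker : Lam8 := wedge Kplus Kminus

/-- The odd Fourier transform `F_odd(a) = Ber(K ∧ a)`. -/
def Fodd (a : Lam8) : Lam8 := Ber (wedge Kker a)

/-- Index of `τ^a`. -/
def tI (a : Fin 2) : Fin 8 := ⟨a.val, by have := a.isLt; omega⟩
/-- Index of `τ̄^a`. -/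
def tbI (a : Fin 2) : Fin 8 := ⟨a.val + 2, by have := a.isLt; omega⟩
/-- Index of `θ^a`. -/
def thI (a : Fin 2) : Fin 8 := ⟨a.val + 4, by have := a.isLt; omega⟩
/-- Index of `θ̄^a`. -/
def thbI (a : Fin 2) : Fin 8 := ⟨a.val + 6, by have := a.isLt; omega⟩


/-- The sign exponent, as a computable natural number. -/
def kzN (A B : Finset (Fin 8)) : ℕ := ∑ a ∈ A, (B.filter (· < a)).card

theorem kz_even {A B : Finset (Fin 8)} (h : kzN A B % 2 = 0) : kz A B = 1 :=
  Even.neg_one_pow (Nat.even_iff.mpr h)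

theorem kz_odd {A B : Finset (Fin 8)} (h : kzN A B % 2 = 1) : kz A B = -1 :=
  Odd.neg_one_pow (Nat.odd_iff.mpr h)

theorem wedge_add_left (f f' g : Lam8) : wedge (f + f') g = wedge f g + wedge f' g := by
  funext S
  simp only [wedge, Pi.add_apply, ← Finset.sum_add_distrib]
  exact Finset.sum_congr rfl fun _ _ => by ring

theorem wedge_add_right (f g g' : Lam8) : wedge f (g + g') = wedge f g + wedge f g' := by
  funext S
  simp only [wedge, Pi.add_apply, ← Finset.sum_add_distrib]
  exact Finset.sum_congr rfl fun _ _ => by ring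

theorem wedge_smul_left (c : ℂ) (f g : Lam8) : wedge (c • f) g = c • wedge f g := by
  funext S
  simp only [wedge, Pi.smul_apply, smul_eq_mul, Finset.mul_sum]
  exact Finset.sum_congr rfl fun _ _ => by ring

theorem wedge_smul_right (c : ℂ) (f g : Lam8) : wedge f (c • g) = c • wedge f g := by
  funext S
  simp only [wedge, Pi.smul_apply, smul_eq_mul, Finset.mul_sum]
  exact Finset.sum_congr rfl fun _ _ => by ring

theorem Ber_add (f g : Lam8) : Ber (f + g) = Ber f + Ber g := by
  funext S
  simp only [Ber, Pi.add_apply]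
  split_ifs <;> simp

theorem Ber_smul (c : ℂ) (f : Lam8) : Ber (c • f) = c • Ber f := by
  funext S
  simp only [Ber, Pi.smul_apply]
  split_ifs <;> simp

theorem wedge_E8_apply (A B S : Finset (Fin 8)) :
    wedge (E8 A) (E8 B) S = if A ⊆ S ∧ S \ A = B then kz A B else 0 := by
  unfold wedge E8
  by_cases hA : A ⊆ S
  · rw [Finset.sum_eq_single A]
    · by_cases hB : S \ A = B
      · simp [hA, hB]
      · simp [hB]
    · intro C _ hC
      simp [hC]
    · intro h
      exact absurd (Finset.mem_powerset.mpr hA) h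
  · rw [if_neg (fun h => hA h.1)]
    refine Finset.sum_eq_zero fun C hC => ?_
    have : C ≠ A := fun h => hA (h ▸ Finset.mem_powerset.mp hC)
    simp [this]

theorem wedge_E8 (A B : Finset (Fin 8)) (h : Disjoint A B) :
    wedge (E8 A) (E8 B) = kz A B • E8 (A ∪ B) := by
  funext S
  rw [wedge_E8_apply]
  have : (A ⊆ S ∧ S \ A = B) ↔ S = A ∪ B := by
    constructor
    · rintro ⟨h1, rfl⟩
      exact (Finset.union_sdiff_of_subset h1).symm
    · rintro rfl
      exact ⟨Finset.subset_union_left, Finset.union_sdiff_cancel_left h⟩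
  simp [this, E8]

theorem wedge_E8_zero (A B : Finset (Fin 8)) (h : ¬ Disjoint A B) :
    wedge (E8 A) (E8 B) = 0 := by
  funext S
  rw [wedge_E8_apply, if_neg]
  · rfl
  · rintro ⟨_, rfl⟩
    exact h Finset.disjoint_sdiff

theorem wedge_pos {A B : Finset (Fin 8)} (C : Finset (Fin 8))
    (h : Disjoint A B ∧ A ∪ B = C ∧ kzN A B % 2 = 0) : wedge (E8 A) (E8 B) = E8 C := by
  rw [wedge_E8 A B h.1, h.2.1, kz_even h.2.2, one_smul]

theorem wedge_neg {A B : Finset (Fin 8)} (C : Finset (Fin 8))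
    (h : Disjoint A B ∧ A ∪ B = C ∧ kzN A B % 2 = 1) :
    wedge (E8 A) (E8 B) = (-1 : ℂ) • E8 C := by
  rw [wedge_E8 A B h.1, h.2.1, kz_odd h.2.2]

theorem Ber_E8 (S : Finset (Fin 8)) (h : ({4, 5, 6, 7} : Finset (Fin 8)) ⊆ S) :
    Ber (E8 S) = E8 (S \ {4, 5, 6, 7}) := by
  have key : ∀ T : Finset (Fin 8), (T ⊆ {0, 1, 2, 3} ∧ T ∪ {4, 5, 6, 7} = S) ↔
      T = S \ {4, 5, 6, 7} := by
    have hd : Disjoint ({0, 1, 2, 3} : Finset (Fin 8)) {4, 5, 6, 7} := by decide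
    have hc : ∀ x : Fin 8, x ∉ ({4, 5, 6, 7} : Finset (Fin 8)) →
      x ∈ ({0, 1, 2, 3} : Finset (Fin 8)) := by decide
    intro T
    constructor
    · rintro ⟨h1, rfl⟩
      exact (Finset.union_sdiff_cancel_right (Finset.disjoint_of_subset_left h1 hd)).symm
    · rintro rfl
      exact ⟨fun x hx => hc x (Finset.mem_sdiff.mp hx).2, Finset.sdiff_union_of_subset h⟩
  funext T
  have := key T
  simp only [Ber, E8, ← this]
  split_ifs <;> tauto

theorem Ber_E8_zero (S : Finset (Fin 8)) (h : ¬ ({4, 5, 6, 7} : Finset (Fin 8)) ⊆ S) :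
    Ber (E8 S) = 0 := by
  funext T
  simp only [Ber, E8]
  split_ifs with h1 h2
  · exact absurd (h2 ▸ Finset.subset_union_right) h
  · rfl
  · rfl

/-- `Ber (e_A ∧ e_B)` vanishes unless `A`, `B` are disjoint and cover the odd directions. -/
theorem BW_zero {A B : Finset (Fin 8)}
    (h : ¬ (Disjoint A B ∧ ({4, 5, 6, 7} : Finset (Fin 8)) ⊆ A ∪ B)) :
    Ber (wedge (E8 A) (E8 B)) = 0 := by
  by_cases hd : Disjoint A B
  · rw [wedge_E8 A B hd, Ber_smul, Ber_E8_zero _ (fun h' => h ⟨hd, h'⟩), smul_zero]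
  · rw [wedge_E8_zero A B hd]
    funext S
    simp [Ber]

theorem BW_pos {A B : Finset (Fin 8)} (C : Finset (Fin 8))
    (h : Disjoint A B ∧ ({4, 5, 6, 7} : Finset (Fin 8)) ⊆ A ∪ B ∧
      (A ∪ B) \ {4, 5, 6, 7} = C ∧ kzN A B % 2 = 0) :
    Ber (wedge (E8 A) (E8 B)) = E8 C := by
  rw [wedge_E8 A B h.1, Ber_smul, Ber_E8 _ h.2.1, h.2.2.1, kz_even h.2.2.2, one_smul]

theorem BW_neg {A B : Finset (Fin 8)} (C : Finset (Fin 8))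
    (h : Disjoint A B ∧ ({4, 5, 6, 7} : Finset (Fin 8)) ⊆ A ∪ B ∧
      (A ∪ B) \ {4, 5, 6, 7} = C ∧ kzN A B % 2 = 1) :
    Ber (wedge (E8 A) (E8 B)) = (-1 : ℂ) • E8 C := by
  rw [wedge_E8 A B h.1, Ber_smul, Ber_E8 _ h.2.1, h.2.2.1, kz_odd h.2.2.2]

theorem Kker_eq : Kker =
    (1 : ℂ) • E8 ∅ +
    (-Complex.I) • E8 {2, 7} +
    Complex.I • E8 {3, 6} +
    (1 : ℂ) • E8 {2, 3, 6, 7} +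
    (-Complex.I) • E8 {0, 5} +
    (1 : ℂ) • E8 {0, 2, 5, 7} +
    (-1 : ℂ) • E8 {0, 3, 5, 6} +
    (-Complex.I) • E8 {0, 2, 3, 5, 6, 7} +
    Complex.I • E8 {1, 4} +
    (-1 : ℂ) • E8 {1, 2, 4, 7} +
    (1 : ℂ) • E8 {1, 3, 4, 6} +
    Complex.I • E8 {1, 2, 3, 4, 6, 7} +
    (1 : ℂ) • E8 {0, 1, 4, 5} +
    (-Complex.I) • E8 {0, 1, 2, 4, 5, 7} +
    Complex.I • E8 {0, 1, 3, 4, 5, 6} +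
    (1 : ℂ) • E8 {0, 1, 2, 3, 4, 5, 6, 7} := by
  have hp : Kplus = E8 ∅ + (-Complex.I) • E8 {0, 5} + Complex.I • E8 {1, 4} +
      E8 {0, 1, 4, 5} := by
    simp only [Kplus, sub_eq_add_neg, neg_smul]
  have hm : Kminus = E8 ∅ + (-Complex.I) • E8 {2, 7} + Complex.I • E8 {3, 6} +
      E8 {2, 3, 6, 7} := by
    simp only [Kminus, sub_eq_add_neg, neg_smul]
  rw [Kker, hp, hm]
  simp only [wedge_add_left, wedge_add_right, wedge_smul_left, wedge_smul_right]
  rw [wedge_pos (A := ∅) (B := ∅) ∅ (by decide),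
    wedge_pos (A := ∅) (B := {2, 7}) {2, 7} (by decide),
    wedge_pos (A := ∅) (B := {3, 6}) {3, 6} (by decide),
    wedge_pos (A := ∅) (B := {2, 3, 6, 7}) {2, 3, 6, 7} (by decide),
    wedge_pos (A := {0, 5}) (B := ∅) {0, 5} (by decide),
    wedge_neg (A := {0, 5}) (B := {2, 7}) {0, 2, 5, 7} (by decide),
    wedge_neg (A := {0, 5}) (B := {3, 6}) {0, 3, 5, 6} (by decide),
    wedge_pos (A := {0, 5}) (B := {2, 3, 6, 7}) {0, 2, 3, 5, 6, 7} (by decide),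
    wedge_pos (A := {1, 4}) (B := ∅) {1, 4} (by decide),
    wedge_neg (A := {1, 4}) (B := {2, 7}) {1, 2, 4, 7} (by decide),
    wedge_neg (A := {1, 4}) (B := {3, 6}) {1, 3, 4, 6} (by decide),
    wedge_pos (A := {1, 4}) (B := {2, 3, 6, 7}) {1, 2, 3, 4, 6, 7} (by decide),
    wedge_pos (A := {0, 1, 4, 5}) (B := ∅) {0, 1, 4, 5} (by decide),
    wedge_pos (A := {0, 1, 4, 5}) (B := {2, 7}) {0, 1, 2, 4, 5, 7} (by decide),
    wedge_pos (A := {0, 1, 4, 5}) (B := {3, 6}) {0, 1, 3, 4, 5, 6} (by decide),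
    wedge_pos (A := {0, 1, 4, 5}) (B := {2, 3, 6, 7}) {0, 1, 2, 3, 4, 5, 6, 7} (by decide)]
  simp only [smul_add, smul_smul, neg_mul, mul_neg, Complex.I_mul_I, neg_neg, one_smul, mul_one]
  module

theorem Fodd_E8 (S : Finset (Fin 8)) : Fodd (E8 S) =
    (1 : ℂ) • Ber (wedge (E8 ∅) (E8 S)) +
    (-Complex.I) • Ber (wedge (E8 {2, 7}) (E8 S)) +
    Complex.I • Ber (wedge (E8 {3, 6}) (E8 S)) +
    (1 : ℂ) • Ber (wedge (E8 {2, 3, 6, 7}) (E8 S)) +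
    (-Complex.I) • Ber (wedge (E8 {0, 5}) (E8 S)) +
    (1 : ℂ) • Ber (wedge (E8 {0, 2, 5, 7}) (E8 S)) +
    (-1 : ℂ) • Ber (wedge (E8 {0, 3, 5, 6}) (E8 S)) +
    (-Complex.I) • Ber (wedge (E8 {0, 2, 3, 5, 6, 7}) (E8 S)) +
    Complex.I • Ber (wedge (E8 {1, 4}) (E8 S)) +
    (-1 : ℂ) • Ber (wedge (E8 {1, 2, 4, 7}) (E8 S)) +
    (1 : ℂ) • Ber (wedge (E8 {1, 3, 4, 6}) (E8 S)) +
    Complex.I • Ber (wedge (E8 {1, 2, 3, 4, 6, 7}) (E8 S)) +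
    (1 : ℂ) • Ber (wedge (E8 {0, 1, 4, 5}) (E8 S)) +
    (-Complex.I) • Ber (wedge (E8 {0, 1, 2, 4, 5, 7}) (E8 S)) +
    Complex.I • Ber (wedge (E8 {0, 1, 3, 4, 5, 6}) (E8 S)) +
    (1 : ℂ) • Ber (wedge (E8 {0, 1, 2, 3, 4, 5, 6, 7}) (E8 S)) := by
  simp only [Fodd, Kker_eq, wedge_add_left, wedge_smul_left, Ber_add, Ber_smul]

theorem Fodd_empty : Fodd (E8 ∅) = E8 {0, 1, 2, 3} := by
  rw [Fodd_E8, BW_pos (A := {0, 1, 2, 3, 4, 5, 6, 7}) (B := ∅) {0, 1, 2, 3} (by decide)]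
  repeat rw [BW_zero (B := ∅) (by decide)]
  module

theorem Fodd_4 : Fodd (E8 {4}) = Complex.I • E8 {0, 2, 3} := by
  rw [Fodd_E8, BW_neg (A := {0, 2, 3, 5, 6, 7}) (B := {4}) {0, 2, 3} (by decide)]
  repeat rw [BW_zero (B := {4}) (by decide)]
  module

theorem Fodd_5 : Fodd (E8 {5}) = Complex.I • E8 {1, 2, 3} := by
  rw [Fodd_E8, BW_pos (A := {1, 2, 3, 4, 6, 7}) (B := {5}) {1, 2, 3} (by decide)]
  repeat rw [BW_zero (B := {5}) (by decide)]
  module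

theorem Fodd_6 : Fodd (E8 {6}) = Complex.I • E8 {0, 1, 2} := by
  rw [Fodd_E8, BW_neg (A := {0, 1, 2, 4, 5, 7}) (B := {6}) {0, 1, 2} (by decide)]
  repeat rw [BW_zero (B := {6}) (by decide)]
  module

theorem Fodd_7 : Fodd (E8 {7}) = Complex.I • E8 {0, 1, 3} := by
  rw [Fodd_E8, BW_pos (A := {0, 1, 3, 4, 5, 6}) (B := {7}) {0, 1, 3} (by decide)]
  repeat rw [BW_zero (B := {7}) (by decide)]
  module

theorem Fodd_45 : Fodd (E8 {4, 5}) = E8 {2, 3} := by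
  rw [Fodd_E8, BW_pos (A := {2, 3, 6, 7}) (B := {4, 5}) {2, 3} (by decide)]
  repeat rw [BW_zero (B := {4, 5}) (by decide)]
  module

theorem Fodd_46 : Fodd (E8 {4, 6}) = -(E8 {0, 2}) := by
  rw [Fodd_E8, BW_neg (A := {0, 2, 5, 7}) (B := {4, 6}) {0, 2} (by decide)]
  repeat rw [BW_zero (B := {4, 6}) (by decide)]
  module

theorem Fodd_47 : Fodd (E8 {4, 7}) = -(E8 {0, 3}) := by
  rw [Fodd_E8, BW_pos (A := {0, 3, 5, 6}) (B := {4, 7}) {0, 3} (by decide)]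
  repeat rw [BW_zero (B := {4, 7}) (by decide)]
  module

theorem Fodd_56 : Fodd (E8 {5, 6}) = -(E8 {1, 2}) := by
  rw [Fodd_E8, BW_pos (A := {1, 2, 4, 7}) (B := {5, 6}) {1, 2} (by decide)]
  repeat rw [BW_zero (B := {5, 6}) (by decide)]
  module

theorem Fodd_57 : Fodd (E8 {5, 7}) = -(E8 {1, 3}) := by
  rw [Fodd_E8, BW_neg (A := {1, 3, 4, 6}) (B := {5, 7}) {1, 3} (by decide)]
  repeat rw [BW_zero (B := {5, 7}) (by decide)]
  module

theorem Fodd_67 : Fodd (E8 {6, 7}) = E8 {0, 1} := by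
  rw [Fodd_E8, BW_pos (A := {0, 1, 4, 5}) (B := {6, 7}) {0, 1} (by decide)]
  repeat rw [BW_zero (B := {6, 7}) (by decide)]
  module

theorem Fodd_456 : Fodd (E8 {4, 5, 6}) = Complex.I • E8 {2} := by
  rw [Fodd_E8, BW_neg (A := {2, 7}) (B := {4, 5, 6}) {2} (by decide)]
  repeat rw [BW_zero (B := {4, 5, 6}) (by decide)]
  module

theorem Fodd_457 : Fodd (E8 {4, 5, 7}) = Complex.I • E8 {3} := by
  rw [Fodd_E8, BW_pos (A := {3, 6}) (B := {4, 5, 7}) {3} (by decide)]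
  repeat rw [BW_zero (B := {4, 5, 7}) (by decide)]
  module

theorem Fodd_467 : Fodd (E8 {4, 6, 7}) = Complex.I • E8 {0} := by
  rw [Fodd_E8, BW_neg (A := {0, 5}) (B := {4, 6, 7}) {0} (by decide)]
  repeat rw [BW_zero (B := {4, 6, 7}) (by decide)]
  module

theorem Fodd_567 : Fodd (E8 {5, 6, 7}) = Complex.I • E8 {1} := by
  rw [Fodd_E8, BW_pos (A := {1, 4}) (B := {5, 6, 7}) {1} (by decide)]
  repeat rw [BW_zero (B := {5, 6, 7}) (by decide)]
  module

theorem Fodd_4567 : Fodd (E8 {4, 5, 6, 7}) = E8 ∅ := by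
  rw [Fodd_E8, BW_pos (A := ∅) (B := {4, 5, 6, 7}) ∅ (by decide)]
  repeat rw [BW_zero (B := {4, 5, 6, 7}) (by decide)]
  module

/-- the values of the odd Fourier transform `F_odd : ⋀Θ → ⋀T` on the sixteen
monomials of `⋀Θ` (`a, b ∈ {1,2}`): `F_odd(1) = τ¹∧τ²∧τ̄¹∧τ̄²`, `F_odd(θ^a) = i·τ^a∧τ̄¹∧τ̄²`,
`F_odd(θ̄^a) = i·τ¹∧τ²∧τ̄^a`, `F_odd(θ¹∧θ²) = τ̄¹∧τ̄²`, `F_odd(θ̄¹∧θ̄²) = τ¹∧τ²`,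
`F_odd(θ^a∧θ̄^b) = −τ^a∧τ̄^b`, `F_odd(θ¹∧θ²∧θ̄^a) = i·τ̄^a`, `F_odd(θ^a∧θ̄¹∧θ̄²) = i·τ^a`,
`F_odd(θ¹∧θ²∧θ̄¹∧θ̄²) = 1`. -/
theorem stmt13 :
    Fodd (E8 ∅) = E8 {0, 1, 2, 3} ∧
    (∀ a : Fin 2, Fodd (E8 {thI a}) = Complex.I • E8 {tI a, 2, 3}) ∧
    (∀ a : Fin 2, Fodd (E8 {thbI a}) = Complex.I • E8 {0, 1, tbI a}) ∧
    Fodd (E8 {4, 5}) = E8 {2, 3} ∧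
    Fodd (E8 {6, 7}) = E8 {0, 1} ∧
    (∀ a b : Fin 2, Fodd (E8 {thI a, thbI b}) = -(E8 {tI a, tbI b})) ∧
    (∀ a : Fin 2, Fodd (E8 {4, 5, thbI a}) = Complex.I • E8 {tbI a}) ∧
    (∀ a : Fin 2, Fodd (E8 {thI a, 6, 7}) = Complex.I • E8 {tI a}) ∧
    Fodd (E8 {4, 5, 6, 7}) = E8 ∅ := by
  refine ⟨Fodd_empty, ?_, ?_, Fodd_45, Fodd_67, ?_, ?_, ?_, Fodd_4567⟩
  · intro a
    fin_cases a
    · exact Fodd_4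
    · exact Fodd_5
  · intro a
    fin_cases a
    · exact Fodd_6
    · exact Fodd_7
  · intro a b
    fin_cases a <;> fin_cases b
    · exact Fodd_46
    · exact Fodd_47
    · exact Fodd_56
    · exact Fodd_57
  · intro a
    fin_cases a
    · exact Fodd_456
    · exact Fodd_457
  · intro a
    fin_cases a
    · exact Fodd_467
    · exact Fodd_567

end
end

section
/- In the model of superfunctions on Minkowski superspacetime fixed in the context, a smooth map f : ℝ⁴ → Λ satisfies the chirality equations D̄₁ f = 0 and D̄₂ f = 0 if and only if there exist (necessarily unique) smooth functions φ, F : ℝ⁴ → ℂ and ψ₁, ψ₂ : ℝ⁴ → ℂ such that f = φ + Σ_a θ^a ψ_a + F·θ¹∧θ² − i Σ_{μ,a,b} Γ^μ_{ab}·θ^a∧θ̄^b·∂_μφ − i Σ_{μ,a,b,c} Γ^μ_{ab}·θ^c∧θ^a∧θ̄^b·∂_μψ_c + (□φ)·θ¹∧θ²∧θ̄¹∧θ̄², where □ := ∂₀² − ∂₁² − ∂₂² − ∂₃². -/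
noncomputable section

/-- The left-invariant odd derivative `D̄_b = ∂_{θ̄^b} − i Σ_{μ,a} Γ^μ_{ab} e_{θ^a} ∂_μ`. -/
def DbOp (b : Fin 2) (f : (Fin 4 → ℝ) → Lam) : (Fin 4 → ℝ) → Lam :=
  fun x => dOp (θbi b) (f x) -
    ∑ μ : Fin 4, ∑ a : Fin 2, (Complex.I * Gam μ a b) • eOp (θi a) (pd μ f x)

/-- The unit `1 ∈ Λ` (the empty exterior monomial), in coordinates. -/
def unitLam : Lam := fun S => if S = ∅ then 1 else 0

/-- The partial derivative `∂_μ` of a scalar function `g : ℝ⁴ → ℂ`. -/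
def pdC (μ : Fin 4) (g : (Fin 4 → ℝ) → ℂ) : (Fin 4 → ℝ) → ℂ :=
  fun x => fderiv ℝ g x (Pi.single μ 1)

/-- The wave operator `□ = ∂₀² − ∂₁² − ∂₂² − ∂₃²` on scalar functions. -/
def boxC (g : (Fin 4 → ℝ) → ℂ) : (Fin 4 → ℝ) → ℂ :=
  fun x => pdC 0 (pdC 0 g) x - pdC 1 (pdC 1 g) x - pdC 2 (pdC 2 g) x - pdC 3 (pdC 3 g) x

/-- The chiral expansion
`φ + Σ_a θ^a ψ_a + F θ¹∧θ² − i Σ Γ^μ_{ab} θ^a∧θ̄^b ∂_μφ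
  − i Σ Γ^μ_{ab} θ^c∧θ^a∧θ̄^b ∂_μψ_c + (□φ) θ¹∧θ²∧θ̄¹∧θ̄²`
of a superfunction with component fields `φ`, `ψ₁, ψ₂`, `F`. -/
def chiralExpansion (φ F : (Fin 4 → ℝ) → ℂ) (ψ : Fin 2 → (Fin 4 → ℝ) → ℂ) :
    (Fin 4 → ℝ) → Lam := fun x =>
  (φ x) • unitLam
  + ∑ a : Fin 2, (ψ a x) • eOp (θi a) unitLam
  + (F x) • eOp (θi 0) (eOp (θi 1) unitLam)
  - ∑ μ : Fin 4, ∑ a : Fin 2, ∑ b : Fin 2,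
      (Complex.I * Gam μ a b * pdC μ φ x) • eOp (θi a) (eOp (θbi b) unitLam)
  - ∑ μ : Fin 4, ∑ a : Fin 2, ∑ b : Fin 2, ∑ c : Fin 2,
      (Complex.I * Gam μ a b * pdC μ (ψ c) x) •
        eOp (θi c) (eOp (θi a) (eOp (θbi b) unitLam))
  + (boxC φ x) • eOp (θi 0) (eOp (θi 1) (eOp (θbi 0) (eOp (θbi 1) unitLam)))

lemma all_sets (S : Finset (Fin 4)) : S = ∅ ∨ S = {0} ∨ S = {1} ∨ S = {2} ∨ S = {3} ∨ S = {0,1} ∨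
    S = {0,2} ∨ S = {0,3} ∨ S = {1,2} ∨ S = {1,3} ∨ S = {2,3} ∨ S = {0,1,2} ∨ S = {0,1,3} ∨
    S = {0,2,3} ∨ S = {1,2,3} ∨ S = {0,1,2,3} := by
  revert S; decide

/-- Even/odd form of the sign, suited to evaluation. -/
lemma ksign_eq_s17 (i : Fin 4) (S : Finset (Fin 4)) :
    ksign i S = if Even (S.filter (· < i)).card then 1 else -1 := by
  unfold ksign
  split_ifs with h
  · exact h.neg_one_pow
  · exact (Nat.not_even_iff_odd.mp h).neg_one_pow

lemma pd_apply (f : (Fin 4 → ℝ) → Lam) (hf : Differentiable ℝ f) (μ : Fin 4) (x : Fin 4 → ℝ)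
    (S : Finset (Fin 4)) : pd μ f x S = pdC μ (fun y => f y S) x := by
  unfold pd pdC
  have h : HasFDerivAt (fun y => f y S)
      ((ContinuousLinearMap.proj (R := ℝ) S).comp (fderiv ℝ f x)) x :=
    (ContinuousLinearMap.proj (R := ℝ) (φ := fun _ : Finset (Fin 4) => ℂ) S).hasFDerivAt.comp x
      (hf x).hasFDerivAt
  rw [h.fderiv]
  rfl

/-- Contracted derivative `Σ_μ Γ^μ_{ab} ∂_μ`. -/
def PP (a b : Fin 2) (g : (Fin 4 → ℝ) → ℂ) (x : Fin 4 → ℝ) : ℂ := ∑ μ : Fin 4, Gam μ a b * pdC μ g x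

lemma DbOp_apply (f : (Fin 4 → ℝ) → Lam) (hf : Differentiable ℝ f) (b : Fin 2) (x : Fin 4 → ℝ)
    (S : Finset (Fin 4)) : DbOp b f x S =
      (if θbi b ∈ S then 0 else
        (if Even (S.filter (· < θbi b)).card then 1 else -1) * f x (insert (θbi b) S)) -
      Complex.I * ((if θi 0 ∈ S then (if Even (S.filter (· < θi 0)).card then 1 else -1) *
          PP 0 b (fun y => f y (S.erase (θi 0))) x else 0) +
        (if θi 1 ∈ S then (if Even (S.filter (· < θi 1)).card then 1 else -1) *
          PP 1 b (fun y => f y (S.erase (θi 1))) x else 0)) := by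
  simp only [DbOp, dOp, eOp, Pi.sub_apply, Pi.add_apply, Pi.smul_apply, smul_eq_mul,
    pd_apply f hf, ksign_eq_s17, PP, Fin.sum_univ_two, Fin.sum_univ_four]
  congr 1
  by_cases h0 : θi 0 ∈ S <;> by_cases h1 : θi 1 ∈ S <;> simp only [h0, h1, if_true, if_false] <;> ring

lemma chiral_coeff (φ F : (Fin 4 → ℝ) → ℂ) (ψ : Fin 2 → (Fin 4 → ℝ) → ℂ) (x : Fin 4 → ℝ)
    (S : Finset (Fin 4)) : chiralExpansion φ F ψ x S =
      φ x * unitLam S + (ψ 0 x * eOp 0 unitLam S + ψ 1 x * eOp 1 unitLam S)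
      + F x * eOp 0 (eOp 1 unitLam) S
      - Complex.I * (PP 0 0 φ x * eOp 0 (eOp 2 unitLam) S + PP 0 1 φ x * eOp 0 (eOp 3 unitLam) S
        + PP 1 0 φ x * eOp 1 (eOp 2 unitLam) S + PP 1 1 φ x * eOp 1 (eOp 3 unitLam) S)
      - Complex.I * (
        PP 0 0 (ψ 0) x * eOp 0 (eOp 0 (eOp 2 unitLam)) S + PP 0 1 (ψ 0) x * eOp 0 (eOp 0 (eOp 3 unitLam)) S
        + PP 1 0 (ψ 0) x * eOp 0 (eOp 1 (eOp 2 unitLam)) S + PP 1 1 (ψ 0) x * eOp 0 (eOp 1 (eOp 3 unitLam)) S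
        + PP 0 0 (ψ 1) x * eOp 1 (eOp 0 (eOp 2 unitLam)) S + PP 0 1 (ψ 1) x * eOp 1 (eOp 0 (eOp 3 unitLam)) S
        + PP 1 0 (ψ 1) x * eOp 1 (eOp 1 (eOp 2 unitLam)) S + PP 1 1 (ψ 1) x * eOp 1 (eOp 1 (eOp 3 unitLam)) S)
      + boxC φ x * eOp 0 (eOp 1 (eOp 2 (eOp 3 unitLam))) S := by
  have e0 : θi 0 = 0 := rfl
  have e1 : θi 1 = 1 := rfl
  have e2 : θbi 0 = 2 := rfl
  have e3 : θbi 1 = 3 := rfl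
  simp only [chiralExpansion, Pi.sub_apply, Pi.add_apply, Pi.smul_apply, smul_eq_mul,
    PP, Fin.sum_univ_two, Fin.sum_univ_four, e0, e1, e2, e3]
  ring

lemma chiral_iff (f : (Fin 4 → ℝ) → Lam) (φ F : (Fin 4 → ℝ) → ℂ) (ψ : Fin 2 → (Fin 4 → ℝ) → ℂ) :
    f = chiralExpansion φ F ψ ↔ ∀ x,
      f x ∅ = φ x ∧ f x {0} = ψ 0 x ∧ f x {1} = ψ 1 x ∧ f x {2} = 0 ∧ f x {3} = 0 ∧
      f x {0,1} = F x ∧ f x {0,2} = -Complex.I * PP 0 0 φ x ∧ f x {0,3} = -Complex.I * PP 0 1 φ x ∧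
      f x {1,2} = -Complex.I * PP 1 0 φ x ∧ f x {1,3} = -Complex.I * PP 1 1 φ x ∧
      f x {2,3} = 0 ∧
      f x {0,1,2} = -Complex.I * (PP 1 0 (ψ 0) x - PP 0 0 (ψ 1) x) ∧
      f x {0,1,3} = -Complex.I * (PP 1 1 (ψ 0) x - PP 0 1 (ψ 1) x) ∧
      f x {0,2,3} = 0 ∧ f x {1,2,3} = 0 ∧ f x {0,1,2,3} = boxC φ x := by
  have key : ∀ x, (f x = chiralExpansion φ F ψ x ↔ ∀ S, f x S = chiralExpansion φ F ψ x S) :=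
    fun x => funext_iff
  rw [funext_iff]
  refine forall_congr' fun x => ?_
  rw [key]
  have vals : 
      chiralExpansion φ F ψ x ∅ = φ x ∧ chiralExpansion φ F ψ x {0} = ψ 0 x ∧
      chiralExpansion φ F ψ x {1} = ψ 1 x ∧ chiralExpansion φ F ψ x {2} = 0 ∧
      chiralExpansion φ F ψ x {3} = 0 ∧
      chiralExpansion φ F ψ x {0,1} = F x ∧ chiralExpansion φ F ψ x {0,2} = -Complex.I * PP 0 0 φ x ∧
      chiralExpansion φ F ψ x {0,3} = -Complex.I * PP 0 1 φ x ∧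
      chiralExpansion φ F ψ x {1,2} = -Complex.I * PP 1 0 φ x ∧
      chiralExpansion φ F ψ x {1,3} = -Complex.I * PP 1 1 φ x ∧
      chiralExpansion φ F ψ x {2,3} = 0 ∧
      chiralExpansion φ F ψ x {0,1,2} = -Complex.I * (PP 1 0 (ψ 0) x - PP 0 0 (ψ 1) x) ∧
      chiralExpansion φ F ψ x {0,1,3} = -Complex.I * (PP 1 1 (ψ 0) x - PP 0 1 (ψ 1) x) ∧
      chiralExpansion φ F ψ x {0,2,3} = 0 ∧ chiralExpansion φ F ψ x {1,2,3} = 0 ∧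
      chiralExpansion φ F ψ x {0,1,2,3} = boxC φ x := by
    refine ⟨?_, ?_, ?_, ?_, ?_, ?_, ?_, ?_, ?_, ?_, ?_, ?_, ?_, ?_, ?_, ?_⟩ <;>
    · rw [chiral_coeff]
      simp +decide only [eOp, unitLam, ksign_eq_s17, if_true, if_false]
      ring
  obtain ⟨h1, h2, h3, h4, h5, h6, h7, h8, h9, h10, h11, h12, h13, h14, h15, h16⟩ := vals
  constructor
  · intro h
    refine ⟨(h _).trans h1, (h _).trans h2, (h _).trans h3, (h _).trans h4, (h _).trans h5,
      (h _).trans h6, (h _).trans h7, (h _).trans h8, (h _).trans h9, (h _).trans h10,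
      (h _).trans h11, (h _).trans h12, (h _).trans h13, (h _).trans h14, (h _).trans h15,
      (h _).trans h16⟩
  · rintro ⟨k1, k2, k3, k4, k5, k6, k7, k8, k9, k10, k11, k12, k13, k14, k15, k16⟩ S
    rcases all_sets S with h | h | h | h | h | h | h | h | h | h | h | h | h | h | h | h <;> subst h
    exacts [k1.trans h1.symm, k2.trans h2.symm, k3.trans h3.symm, k4.trans h4.symm,
      k5.trans h5.symm, k6.trans h6.symm, k7.trans h7.symm, k8.trans h8.symm, k9.trans h9.symm,
      k10.trans h10.symm, k11.trans h11.symm, k12.trans h12.symm, k13.trans h13.symm,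
      k14.trans h14.symm, k15.trans h15.symm, k16.trans h16.symm]

lemma PP_zero (a b : Fin 2) (x : Fin 4 → ℝ) : PP a b (fun _ => 0) x = 0 := by
  simp [PP, pdC]

lemma pdC_smooth (μ : Fin 4) (g : (Fin 4 → ℝ) → ℂ) (hg : ContDiff ℝ (⊤ : ℕ∞) g) :
    ContDiff ℝ (⊤ : ℕ∞) (pdC μ g) := by
  unfold pdC
  exact (hg.fderiv_right (m := (⊤ : ℕ∞)) (by simp)).clm_apply contDiff_const

lemma pdC_comm (μ ν : Fin 4) (g : (Fin 4 → ℝ) → ℂ) (hg : ContDiff ℝ (⊤ : ℕ∞) g) (x : Fin 4 → ℝ) :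
    pdC μ (pdC ν g) x = pdC ν (pdC μ g) x := by
  have hd : Differentiable ℝ (fderiv ℝ g) :=
    (hg.fderiv_right (m := (⊤ : ℕ∞)) (by simp)).differentiable (by simp)
  have aux : ∀ α β : Fin 4, pdC α (pdC β g) x =
      fderiv ℝ (fderiv ℝ g) x (Pi.single α 1) (Pi.single β 1) := by
    intro α β
    unfold pdC
    rw [fderiv_clm_apply (hd x) (differentiableAt_const _)]
    simp
  rw [aux, aux]
  have hs : IsSymmSndFDerivAt ℝ g x := by
    refine hg.contDiffAt.isSymmSndFDerivAt ?_
    rw [minSmoothness_of_isRCLikeNormedField]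
    exact WithTop.coe_le_coe.mpr le_top
  exact hs _ _

lemma pdC_PP (c : ℂ) (μ : Fin 4) (a b : Fin 2) (g : (Fin 4 → ℝ) → ℂ) (hg : ContDiff ℝ (⊤ : ℕ∞) g)
    (x : Fin 4 → ℝ) :
    pdC μ (fun y => c * PP a b g y) x = c * ∑ ν : Fin 4, Gam ν a b * pdC μ (pdC ν g) x := by
  have hd : ∀ ν, DifferentiableAt ℝ (pdC ν g) x := fun ν =>
    ((pdC_smooth ν g hg).differentiable (by simp)) x
  have h : HasFDerivAt (fun y => c * PP a b g y)
      (c • ∑ ν : Fin 4, Gam ν a b • fderiv ℝ (pdC ν g) x) x := by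
    refine HasFDerivAt.const_mul ?_ c
    unfold PP
    exact HasFDerivAt.fun_sum fun ν _ => (hd ν).hasFDerivAt.const_mul _
  conv_lhs => unfold pdC
  rw [h.fderiv]
  simp [pdC]

lemma PP_PP (c : ℂ) (a b a' b' : Fin 2) (g : (Fin 4 → ℝ) → ℂ) (hg : ContDiff ℝ (⊤ : ℕ∞) g)
    (x : Fin 4 → ℝ) :
    PP a b (fun y => c * PP a' b' g y) x =
      c * ∑ μ : Fin 4, ∑ ν : Fin 4, Gam μ a b * Gam ν a' b' * pdC μ (pdC ν g) x := by
  have h : ∀ k, PP a b k x = ∑ μ : Fin 4, Gam μ a b * pdC μ k x := fun _ => rfl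
  rw [h]
  simp only [pdC_PP c _ a' b' g hg x]
  simp only [Finset.mul_sum]
  refine Finset.sum_congr rfl fun μ _ => Finset.sum_congr rfl fun ν _ => ?_
  ring

lemma PP_comm (c : ℂ) (a b a' b' : Fin 2) (g : (Fin 4 → ℝ) → ℂ) (hg : ContDiff ℝ (⊤ : ℕ∞) g)
    (x : Fin 4 → ℝ) :
    PP a b (fun y => c * PP a' b' g y) x = PP a' b' (fun y => c * PP a b g y) x := by
  rw [PP_PP _ _ _ _ _ _ hg, PP_PP _ _ _ _ _ _ hg, Finset.sum_comm]
  congr 1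
  refine Finset.sum_congr rfl fun μ _ => Finset.sum_congr rfl fun ν _ => ?_
  rw [pdC_comm ν μ g hg]; ring

lemma PP_det (c : ℂ) (g : (Fin 4 → ℝ) → ℂ) (hg : ContDiff ℝ (⊤ : ℕ∞) g) (x : Fin 4 → ℝ) :
    PP 0 0 (fun y => c * PP 1 1 g y) x - PP 1 0 (fun y => c * PP 0 1 g y) x = c * boxC g x := by
  rw [PP_PP _ _ _ _ _ _ hg, PP_PP _ _ _ _ _ _ hg]
  have e := pdC_comm 0 1 g hg x
  have e' := pdC_comm 2 3 g hg x
  simp [Fin.sum_univ_four, Gam, boxC, e, e']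
  ring

lemma Db_iff (f : (Fin 4 → ℝ) → Lam) :
    (DbOp 0 f = 0 ∧ DbOp 1 f = 0) ↔ ∀ b x S, DbOp b f x S = 0 := by
  constructor
  · rintro ⟨h0, h1⟩ b x S
    fin_cases b
    · exact congrFun (congrFun h0 x) S
    · exact congrFun (congrFun h1 x) S
  · intro h
    exact ⟨funext fun x => funext fun S => h 0 x S, funext fun x => funext fun S => h 1 x S⟩

lemma θ0 : θi 0 = 0 := rfl
lemma θ1 : θi 1 = 1 := rfl
lemma θ2 : θbi 0 = 2 := rfl
lemma θ3 : θbi 1 = 3 := rfl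

lemma set_norm :
    insert 2 (∅ : Finset (Fin 4)) = ({2} : Finset (Fin 4)) ∧
    insert 3 (∅ : Finset (Fin 4)) = ({3} : Finset (Fin 4)) ∧
    ({0} : Finset (Fin 4)).erase 0 = (∅ : Finset (Fin 4)) ∧
    insert 2 ({0} : Finset (Fin 4)) = ({0,2} : Finset (Fin 4)) ∧
    insert 3 ({0} : Finset (Fin 4)) = ({0,3} : Finset (Fin 4)) ∧
    ({1} : Finset (Fin 4)).erase 1 = (∅ : Finset (Fin 4)) ∧
    insert 2 ({1} : Finset (Fin 4)) = ({1,2} : Finset (Fin 4)) ∧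
    insert 3 ({1} : Finset (Fin 4)) = ({1,3} : Finset (Fin 4)) ∧
    insert 3 ({2} : Finset (Fin 4)) = ({2,3} : Finset (Fin 4)) ∧
    insert 2 ({3} : Finset (Fin 4)) = ({2,3} : Finset (Fin 4)) ∧
    ({0,1} : Finset (Fin 4)).erase 0 = ({1} : Finset (Fin 4)) ∧
    ({0,1} : Finset (Fin 4)).erase 1 = ({0} : Finset (Fin 4)) ∧
    insert 2 ({0,1} : Finset (Fin 4)) = ({0,1,2} : Finset (Fin 4)) ∧
    insert 3 ({0,1} : Finset (Fin 4)) = ({0,1,3} : Finset (Fin 4)) ∧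
    ({0,2} : Finset (Fin 4)).erase 0 = ({2} : Finset (Fin 4)) ∧
    insert 3 ({0,2} : Finset (Fin 4)) = ({0,2,3} : Finset (Fin 4)) ∧
    ({0,3} : Finset (Fin 4)).erase 0 = ({3} : Finset (Fin 4)) ∧
    insert 2 ({0,3} : Finset (Fin 4)) = ({0,2,3} : Finset (Fin 4)) ∧
    ({1,2} : Finset (Fin 4)).erase 1 = ({2} : Finset (Fin 4)) ∧
    insert 3 ({1,2} : Finset (Fin 4)) = ({1,2,3} : Finset (Fin 4)) ∧
    ({1,3} : Finset (Fin 4)).erase 1 = ({3} : Finset (Fin 4)) ∧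
    insert 2 ({1,3} : Finset (Fin 4)) = ({1,2,3} : Finset (Fin 4)) ∧
    ({0,1,2} : Finset (Fin 4)).erase 0 = ({1,2} : Finset (Fin 4)) ∧
    ({0,1,2} : Finset (Fin 4)).erase 1 = ({0,2} : Finset (Fin 4)) ∧
    insert 3 ({0,1,2} : Finset (Fin 4)) = ({0,1,2,3} : Finset (Fin 4)) ∧
    ({0,1,3} : Finset (Fin 4)).erase 0 = ({1,3} : Finset (Fin 4)) ∧
    ({0,1,3} : Finset (Fin 4)).erase 1 = ({0,3} : Finset (Fin 4)) ∧
    insert 2 ({0,1,3} : Finset (Fin 4)) = ({0,1,2,3} : Finset (Fin 4)) ∧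
    ({0,2,3} : Finset (Fin 4)).erase 0 = ({2,3} : Finset (Fin 4)) ∧
    ({1,2,3} : Finset (Fin 4)).erase 1 = ({2,3} : Finset (Fin 4)) ∧
    ({0,1,2,3} : Finset (Fin 4)).erase 0 = ({1,2,3} : Finset (Fin 4)) ∧
    ({0,1,2,3} : Finset (Fin 4)).erase 1 = ({0,2,3} : Finset (Fin 4)) := by
  decide

set_option linter.unusedSimpArgs false in
lemma forward (f : (Fin 4 → ℝ) → Lam) (hf : ContDiff ℝ (⊤ : ℕ∞) f)
    (h : ∀ b x S, DbOp b f x S = 0) :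
    f = chiralExpansion (fun y => f y ∅) (fun y => f y {0,1}) (fun a y => f y {θi a}) := by
  have hd : Differentiable ℝ f := hf.differentiable (by simp)
  have hs : ContDiff ℝ (⊤ : ℕ∞) (fun y => f y ∅) := contDiff_pi.mp hf ∅
  simp only [DbOp_apply f hd] at h
  have k2 : ∀ x, f x {2} = 0 := by
    intro x
    have := h 0 x ∅
    simp +decide only [θ0, θ1, θ2, θ3, if_true, if_false, set_norm] at this
    linear_combination this
  have k3 : ∀ x, f x {3} = 0 := by
    intro x
    have := h 1 x ∅
    simp +decide only [θ0, θ1, θ2, θ3, if_true, if_false, set_norm] at this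
    linear_combination this
  have k23 : ∀ x, f x {2,3} = 0 := by
    intro x
    have := h 0 x {3}
    simp +decide only [θ0, θ1, θ2, θ3, if_true, if_false, set_norm] at this
    linear_combination this
  have k02 : ∀ x, f x {0,2} = -Complex.I * PP 0 0 (fun y => f y ∅) x := by
    intro x
    have := h 0 x {0}
    simp +decide only [θ0, θ1, θ2, θ3, if_true, if_false, set_norm] at this
    linear_combination -this
  have k03 : ∀ x, f x {0,3} = -Complex.I * PP 0 1 (fun y => f y ∅) x := by
    intro x
    have := h 1 x {0}
    simp +decide only [θ0, θ1, θ2, θ3, if_true, if_false, set_norm] at this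
    linear_combination -this
  have k12 : ∀ x, f x {1,2} = -Complex.I * PP 1 0 (fun y => f y ∅) x := by
    intro x
    have := h 0 x {1}
    simp +decide only [θ0, θ1, θ2, θ3, if_true, if_false, set_norm] at this
    linear_combination -this
  have k13 : ∀ x, f x {1,3} = -Complex.I * PP 1 1 (fun y => f y ∅) x := by
    intro x
    have := h 1 x {1}
    simp +decide only [θ0, θ1, θ2, θ3, if_true, if_false, set_norm] at this
    linear_combination -this
  have k012 : ∀ x, f x {0,1,2} =
      -Complex.I * (PP 1 0 (fun y => f y {0}) x - PP 0 0 (fun y => f y {1}) x) := by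
    intro x
    have := h 0 x {0,1}
    simp +decide only [θ0, θ1, θ2, θ3, if_true, if_false, set_norm] at this
    linear_combination this
  have k013 : ∀ x, f x {0,1,3} =
      -Complex.I * (PP 1 1 (fun y => f y {0}) x - PP 0 1 (fun y => f y {1}) x) := by
    intro x
    have := h 1 x {0,1}
    simp +decide only [θ0, θ1, θ2, θ3, if_true, if_false, set_norm] at this
    linear_combination this
  have k023 : ∀ x, f x {0,2,3} = 0 := by
    intro x
    have := h 0 x {0,3}
    simp +decide only [θ0, θ1, θ2, θ3, if_true, if_false, set_norm, k3, PP_zero] at this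
    linear_combination -this
  have k123 : ∀ x, f x {1,2,3} = 0 := by
    intro x
    have := h 0 x {1,3}
    simp +decide only [θ0, θ1, θ2, θ3, if_true, if_false, set_norm, k3, PP_zero] at this
    linear_combination -this
  have k0123 : ∀ x, f x {0,1,2,3} = boxC (fun y => f y ∅) x := by
    intro x
    have := h 0 x {0,1,3}
    simp +decide only [θ0, θ1, θ2, θ3, if_true, if_false, set_norm, k13, k03] at this
    have hdet := PP_det (-Complex.I) _ hs x
    linear_combination this + Complex.I * hdet - boxC (fun y => f y ∅) x * Complex.I_sq
  rw [chiral_iff]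
  intro x
  exact ⟨rfl, rfl, rfl, k2 x, k3 x, rfl, k02 x, k03 x, k12 x, k13 x, k23 x, k012 x, k013 x, k023 x,
    k123 x, k0123 x⟩

lemma backward (f : (Fin 4 → ℝ) → Lam) (hf : ContDiff ℝ (⊤ : ℕ∞) f)
    (φ F : (Fin 4 → ℝ) → ℂ) (ψ : Fin 2 → (Fin 4 → ℝ) → ℂ) (hs : ContDiff ℝ (⊤ : ℕ∞) φ)
    (h : f = chiralExpansion φ F ψ) (b : Fin 2) (x : Fin 4 → ℝ) (S : Finset (Fin 4)) :
    DbOp b f x S = 0 := by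
  have hd : Differentiable ℝ f := hf.differentiable (by simp)
  rw [chiral_iff] at h
  simp only [forall_and] at h
  obtain ⟨k1, k2, k3, k4, k5, k6, k7, k8, k9, k10, k11, k12, k13, k14, k15, k16⟩ := h
  have hdet := PP_det (-Complex.I) _ hs x
  have c1 := PP_comm (-Complex.I) 0 0 1 0 φ hs x
  have c2 := PP_comm (-Complex.I) 0 1 1 1 φ hs x
  have c3 := PP_comm (-Complex.I) 0 0 1 1 φ hs x
  have c4 := PP_comm (-Complex.I) 1 0 0 1 φ hs x
  have hI := Complex.I_sq
  have hb : b = 0 ∨ b = 1 := by revert b; decide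
  rw [DbOp_apply f hd]
  rcases hb with hb | hb <;> subst hb <;>
  rcases all_sets S with h | h | h | h | h | h | h | h | h | h | h | h | h | h | h | h <;> subst h <;>
  simp +decide only [θ0, θ1, θ2, θ3, if_true, if_false, set_norm, k1, k2, k3, k4, k5, k6, k7, k8,
    k9, k10, k11, k12, k13, k14, k15, k16, PP_zero] <;>
  first
  | ring1
  | linear_combination -Complex.I * c1
  | linear_combination -Complex.I * c2
  | linear_combination -Complex.I * hdet + boxC φ x * hI
  | linear_combination Complex.I * hdet - Complex.I * c3 + Complex.I * c4 - boxC φ x * hI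

/-- a smooth superfunction `f : ℝ⁴ → Λ` satisfies the chirality equations
`D̄₁f = 0`, `D̄₂f = 0` if and only if it is of the chiral normal form determined by
(necessarily unique) smooth component fields `φ`, `ψ₁, ψ₂`, `F`. -/
theorem stmt17 (f : (Fin 4 → ℝ) → Lam) (hf : ContDiff ℝ (⊤ : ℕ∞) f) :
    (DbOp 0 f = 0 ∧ DbOp 1 f = 0) ↔
      ∃ (φ F : (Fin 4 → ℝ) → ℂ) (ψ : Fin 2 → (Fin 4 → ℝ) → ℂ),
        ContDiff ℝ (⊤ : ℕ∞) φ ∧ ContDiff ℝ (⊤ : ℕ∞) F ∧ (∀ a : Fin 2, ContDiff ℝ (⊤ : ℕ∞) (ψ a)) ∧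
        f = chiralExpansion φ F ψ ∧
        (∀ (φ' F' : (Fin 4 → ℝ) → ℂ) (ψ' : Fin 2 → (Fin 4 → ℝ) → ℂ),
          f = chiralExpansion φ' F' ψ' → φ' = φ ∧ F' = F ∧ ψ' = ψ) := by
  have hd : Differentiable ℝ f := hf.differentiable (by simp)
  rw [Db_iff f]
  constructor
  · intro h
    refine ⟨_, _, _, contDiff_pi.mp hf ∅, contDiff_pi.mp hf {0,1},
      fun a => contDiff_pi.mp hf {θi a}, forward f hf h, ?_⟩
    intro φ' F' ψ' h'
    rw [chiral_iff] at h'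
    refine ⟨funext fun x => (h' x).1.symm, funext fun x => (h' x).2.2.2.2.2.1.symm, ?_⟩
    have hb : ∀ b : Fin 2, b = 0 ∨ b = 1 := by decide
    funext a x
    rcases hb a with ha | ha <;> subst ha
    · exact (h' x).2.1.symm
    · exact (h' x).2.2.1.symm
  · rintro ⟨φ, F, ψ, hs, -, -, h, -⟩ b x S
    exact backward f hf φ F ψ hs h b x S

end
end
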